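/- Let p be a prime and n ≥ 1. Let L : F_{p^n} → F_{p^n} be a nonzero linearized polynomial L(x) = Σ_{i=0}^{n−1} a_i x^{p^i} with a_k ≠ 0 and a_i = 0 for all i > k (so deg L = p^k), and let G(x) = x^{p^n−2} + L(x). Then for every c ∈ F_{p^n} with c ≠ 1, every a ∈ F_{p^n} with a ≠ 0, and every b ∈ F_{p^n}, the number of x ∈ F_{p^n} satisfying G(x+a) − c·G(x) = b is at most p^k + 4. In fact, the number of such solutions x with x ∉ {0, −a} is at most p^k + 2. -/

import Mathlib

open Finset

/-! Away from `0` and `-a`, multiplying `G (x + a) - c * G x = b` by `x * (x + a)` turns it into a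
polynomial equation `P x = 0` of degree at most `deg L + 2`. Here `P (-a) = -a`, while for `a = 0`
the linear coefficient of `P` is `1 - c`, so `P ≠ 0` as soon as `a ≠ 0` or `c ≠ 1`, and `P` has at
most `deg L + 2` roots. The two points left out account for the difference between the bounds. -/

open Polynomial

theorem encard_setOf_isRoot_le {R : Type*} [CommRing R] [IsDomain R] {P : R[X]} (hP : P ≠ 0) :
    {x | P.IsRoot x}.encard ≤ P.natDegree := by
  classical
  have hroots : {x | P.IsRoot x} = P.roots.toFinset := by ext; simp [hP]
  rw [hroots, Set.encard_coe_eq_coe_finsetCard]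
  exact_mod_cast P.roots.toFinset_card_le.trans P.card_roots'

theorem pow_card_sub_two_eq_inv {K : Type*} [GroupWithZero K] [Fintype K] {x : K} (hx : x ≠ 0) :
    x ^ (Fintype.card K - 2) = x⁻¹ := by
  refine eq_inv_of_mul_eq_one_left ?_
  have hcard : Fintype.card K - 2 + 1 = Fintype.card K - 1 := by
    have := Fintype.one_lt_card (α := K)
    lia
  rw [← pow_succ, hcard, FiniteField.pow_card_sub_one_eq_one x hx]

section LinearizedPolynomial

variable {R : Type*} [Semiring R]

/-- The linearized polynomial `∑_{i < n} A i * X ^ p ^ i` with coefficient sequence `A`. The base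
`p` is an arbitrary natural number, not tied to the characteristic of `R`. -/
noncomputable def linearizedPolynomial (p n : ℕ) (A : ℕ → R) : R[X] :=
  ∑ i ∈ range n, C (A i) * X ^ p ^ i

theorem eval_linearizedPolynomial (p n : ℕ) (A : ℕ → R) (x : R) :
    (linearizedPolynomial p n A).eval x = ∑ i ∈ range n, A i * x ^ p ^ i := by
  simp [linearizedPolynomial, eval_finsetSum]

theorem natDegree_linearizedPolynomial_le {p k : ℕ} (hp : p ≠ 0) (n : ℕ) {A : ℕ → R}
    (hA : ∀ i, k < i → A i = 0) : (linearizedPolynomial p n A).natDegree ≤ p ^ k := by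
  refine natDegree_sum_le_of_forall_le _ _ fun i _ ↦ ?_
  obtain hik | hki := le_or_gt i k
  · exact (natDegree_C_mul_X_pow_le _ _).trans (Nat.pow_le_pow_right hp.pos hik)
  · simp [hA i hki]

end LinearizedPolynomial

section ClearedCDerivative

variable {R : Type*} [CommRing R]

/-- The polynomial obtained from the `c`-derivative equation `G (x + a) - c * G x = b` of
`G x = x⁻¹ + L x` by moving `b` to the left-hand side and multiplying by `x * (x + a)`. -/
noncomputable def clearedCDerivative (L : R[X]) (a b c : R) : R[X] :=
  X * (X + C a) * (taylor a L - C c * L - C b) + (C (1 - c) * X - C (c * a))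

theorem eval_neg_clearedCDerivative (L : R[X]) (a b c : R) :
    (clearedCDerivative L a b c).eval (-a) = -a := by
  simp only [clearedCDerivative, eval_add, eval_sub, eval_mul, eval_X, eval_C]
  ring

theorem coeff_one_clearedCDerivative_zero (L : R[X]) (b c : R) :
    (clearedCDerivative L 0 b c).coeff 1 = 1 - c := by
  simp [clearedCDerivative, mul_assoc, coeff_X_mul, coeff_C]

theorem clearedCDerivative_ne_zero (L : R[X]) {a c : R} (hac : a ≠ 0 ∨ c ≠ 1) (b : R) :
    clearedCDerivative L a b c ≠ 0 := by
  intro hP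
  have ha : a = 0 := by simpa [hP] using eval_neg_clearedCDerivative L a b c
  subst ha
  have hc : 1 - c = 0 := by simpa [hP] using (coeff_one_clearedCDerivative_zero L b c).symm
  exact hac.elim (· rfl) (· (sub_eq_zero.mp hc).symm)

theorem natDegree_clearedCDerivative_le (L : R[X]) (a b c : R) :
    (clearedCDerivative L a b c).natDegree ≤ L.natDegree + 2 := by
  have hN : (taylor a L - C c * L - C b).natDegree ≤ L.natDegree := by
    rw [natDegree_sub_C]
    exact (natDegree_sub_le_of_le (natDegree_taylor L a).le (natDegree_C_mul_le c L)).trans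
      (max_self _).le
  have hquad : (X * (X + C a)).natDegree ≤ 2 := by compute_degree
  have hlin : (C (1 - c) * X - C (c * a)).natDegree ≤ L.natDegree + 2 := by
    compute_degree
    lia
  exact natDegree_add_le_of_degree_le
    ((natDegree_mul_le_of_le hquad hN).trans (add_comm _ _).le) hlin

end ClearedCDerivative

section Field

variable {F : Type*} [Field F]

theorem eval_clearedCDerivative (L : F[X]) {a x : F} (b c : F) (hx : x ≠ 0) (hxa : x + a ≠ 0) :
    (clearedCDerivative L a b c).eval x =
      x * (x + a) * (((x + a)⁻¹ + L.eval (x + a)) - c * (x⁻¹ + L.eval x) - b) := by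
  simp only [clearedCDerivative, eval_add, eval_sub, eval_mul, eval_X, eval_C, taylor_eval]
  field_simp
  ring

theorem cddt_bound_linearized_perturbation_general {G : F → F} {L : F[X]} {d : ℕ}
    (hG : ∀ x, x ≠ 0 → G x = x⁻¹ + L.eval x) (hL : L.natDegree ≤ d) {a c : F}
    (hac : a ≠ 0 ∨ c ≠ 1) (b : F) :
    {x | G (x + a) - c * G x = b}.encard ≤ (d + 4 : ℕ) ∧
      {x | G (x + a) - c * G x = b ∧ x ≠ 0 ∧ x ≠ -a}.encard ≤ (d + 2 : ℕ) := by
  set S := {x | G (x + a) - c * G x = b ∧ x ≠ 0 ∧ x ≠ -a}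
  have hroot : S ⊆ {x | (clearedCDerivative L a b c).IsRoot x} := by
    rintro x ⟨hx, hx0, hxa⟩
    have hxa0 : x + a ≠ 0 := hxa ∘ eq_neg_of_add_eq_zero_left
    rw [Set.mem_ofPred, IsRoot.def, eval_clearedCDerivative L b c hx0 hxa0, ← hG _ hx0,
      ← hG _ hxa0, hx, sub_self, mul_zero]
  have hS : S.encard ≤ (d + 2 : ℕ) :=
    calc S.encard ≤ {x | (clearedCDerivative L a b c).IsRoot x}.encard := Set.encard_le_encard hroot
      _ ≤ (clearedCDerivative L a b c).natDegree :=
        encard_setOf_isRoot_le (clearedCDerivative_ne_zero L hac b)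
      _ ≤ (d + 2 : ℕ) := by
        exact_mod_cast (natDegree_clearedCDerivative_le L a b c).trans (by lia)
  have hcover : {x | G (x + a) - c * G x = b} ⊆ insert 0 (insert (-a) S) := by
    intro x hx
    simp only [Set.mem_insert_iff, S, Set.mem_ofPred] at hx ⊢
    tauto
  refine ⟨?_, hS⟩
  grw [hcover, Set.encard_insert_le, Set.encard_insert_le, hS]
  norm_cast

end Field

theorem cddt_bound_linearized_perturbation
    {F : Type*} [Field F] [Fintype F] [DecidableEq F]
    (p n : ℕ) (hp : p.Prime) (hn : 1 ≤ n)
    (hF : Fintype.card F = p ^ n)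
    (A : ℕ → F) (k : ℕ) (hk : k < n) (hak : A k ≠ 0)
    (hupper : ∀ i, k < i → A i = 0)
    (L : F → F) (hL : ∀ x : F, L x = ∑ i ∈ Finset.range n, A i * x ^ p ^ i)
    (G : F → F) (hG : ∀ x : F, G x = x ^ (p ^ n - 2) + L x) :
    ∀ c : F, c ≠ 1 → ∀ a : F, a ≠ 0 → ∀ b : F,
      (Finset.univ.filter fun x : F => G (x + a) - c * G x = b).card ≤ p ^ k + 4 ∧
      (Finset.univ.filter fun x : F =>
          (G (x + a) - c * G x = b) ∧ x ≠ 0 ∧ x ≠ -a).card ≤ p ^ k + 2 := by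
  intro c hc a _ b
  -- Only for `x ≠ 0`: when `p ^ n = 2` the exponent is `0`, and `0 ^ 0 = 1` while `0⁻¹ = 0`.
  have hG' (x : F) (hx : x ≠ 0) : G x = x⁻¹ + (linearizedPolynomial p n A).eval x := by
    rw [hG, hL, ← hF, pow_card_sub_two_eq_inv hx, eval_linearizedPolynomial]
  simpa only [← Nat.cast_le (α := ℕ∞), ← Set.encard_coe_eq_coe_finsetCard, coe_filter_univ] using
    cddt_bound_linearized_perturbation_general hG'
      (natDegree_linearizedPolynomial_le hp.ne_zero n hupper) (.inr hc) b
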